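/- Let X ⊆ ℝⁿ be an open p-convex set and let f : X → ℝⁿ be a C¹ cooperative irreducible vector field. If γ, δ : [0,T] → X are solutions of the system ẋ = f(x) with γ(0) < δ(0), then γ(t) ≪ δ(t) for every t ∈ (0,T]. -/

import Mathlib

open Set Filter Topology

noncomputable section

/-- `f` is a cooperative vector field on `X`: the off-diagonal entries of the
Jacobian are nonnegative. -/
def coopVF {n : ℕ} (f : (Fin n → ℝ) → (Fin n → ℝ)) (X : Set (Fin n → ℝ)) : Prop :=
  ∀ x ∈ X, ∀ i j : Fin n, i ≠ j → 0 ≤ fderiv ℝ f x (Pi.single j 1) i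

/-- The Jacobian matrix of `f` at `x`. -/
def jacMat {n : ℕ} (f : (Fin n → ℝ) → (Fin n → ℝ)) (x : Fin n → ℝ) :
    Fin n → Fin n → ℝ :=
  fun i j => fderiv ℝ f x (Pi.single j 1) i

/-- A matrix is irreducible if for every nonempty proper subset `S` of indices there
are `i ∈ S`, `j ∉ S` with `A i j ≠ 0`. -/
def matIrred {n : ℕ} (A : Fin n → Fin n → ℝ) : Prop :=
  ∀ S : Set (Fin n), S.Nonempty → S ≠ Set.univ → ∃ i ∈ S, ∃ j ∉ S, A i j ≠ 0

/-- `X` is p-convex: the segment joining any two order-related points of `X` lies in `X`. -/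
def pconvex {n : ℕ} (X : Set (Fin n → ℝ)) : Prop :=
  ∀ x ∈ X, ∀ y ∈ X, x < y → segment ℝ x y ⊆ X

/-- `x ≪ y`: strict inequality in every coordinate. -/
def strLt {n : ℕ} (x y : Fin n → ℝ) : Prop := ∀ i, x i < y i

/-- `γ` is a solution of `ẋ = f(x)` on the time interval `I`, with values in `X`. -/
def IsSolOn {n : ℕ} (f : (Fin n → ℝ) → (Fin n → ℝ)) (X : Set (Fin n → ℝ))
    (I : Set ℝ) (γ : ℝ → Fin n → ℝ) : Prop :=
  (∀ t ∈ I, γ t ∈ X) ∧ (∀ t ∈ I, HasDerivWithinAt γ (f (γ t)) I t)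

/-- The ω-limit set (within `X`) of a curve `γ`. -/
def omegaSet {n : ℕ} (X : Set (Fin n → ℝ)) (γ : ℝ → Fin n → ℝ) :
    Set (Fin n → ℝ) :=
  {y | y ∈ X ∧ ∃ t : ℕ → ℝ, Tendsto t atTop atTop ∧
    Tendsto (fun k => γ (t k)) atTop (𝓝 y)}

/-- The α-limit set (within `X`) of a curve `γ`. -/
def alphaSet {n : ℕ} (X : Set (Fin n → ℝ)) (γ : ℝ → Fin n → ℝ) :
    Set (Fin n → ℝ) :=
  {y | y ∈ X ∧ ∃ t : ℕ → ℝ, Tendsto t atTop atBot ∧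
    Tendsto (fun k => γ (t k)) atTop (𝓝 y)}

/-- The Euclidean norm on `Fin n → ℝ`. -/
def eunorm {n : ℕ} (v : Fin n → ℝ) : ℝ := Real.sqrt (∑ i, (v i) ^ 2)

/-- `X` is order-convex: it contains the order interval of any two of its points. -/
def orderConvex {n : ℕ} (X : Set (Fin n → ℝ)) : Prop :=
  ∀ x ∈ X, ∀ y ∈ X, x ≤ y → Set.Icc x y ⊆ X

/-!
The idea is to reduce to linear differential inequalities `A(t) w ≤ w'` with `A(t)` having
nonnegative off-diagonal entries. For these, `w(a) ≥ 0` persists by a Grönwall estimate on `|w⁻|²`,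
and each coordinate that is positive at some time remains so. If `A(t)` is irreducible and some but
not all coordinates of `w(t)` vanish, then one of the vanishing coordinates has `(A(t) w(t))ᵢ > 0`,
hence positive derivative at time `t`, although it is nonnegative before `t`: a contradiction.

As long as the segment from `γ(t)` to `δ(t)` lies in `X`, the difference `w = δ - γ` satisfies such
an inequality, with `A(t)` the mean of the Jacobian of `f` over that segment. By p-convexity this
is the case whenever `γ(t) ≤ δ(t)`, and by openness also for slightly larger times, so that the
order `γ ≤ δ` can be continued up to the end of the time interval.
-/

section ScalarInequalities

theorem hasDerivAt_negPart_sq (x : ℝ) : HasDerivAt (fun y : ℝ ↦ y⁻ ^ 2) (-(2 * x⁻)) x := by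
  have of_ne_zero : ∀ y : ℝ, y ≠ 0 → HasDerivAt (fun y : ℝ ↦ y⁻ ^ 2) (-(2 * y⁻)) y := by
    intro y hy
    rcases hy.lt_or_gt with hneg | hpos
    · have hsq : HasDerivAt (fun y : ℝ ↦ y ^ 2) (-(2 * y⁻)) y := by
        simpa [negPart_of_nonpos hneg.le] using hasDerivAt_pow 2 y
      refine hsq.congr_of_eventuallyEq ?_
      filter_upwards [Iio_mem_nhds hneg] with z hz
      rw [negPart_of_nonpos (le_of_lt hz), neg_sq]
    · have hzero : HasDerivAt (fun _ : ℝ ↦ (0 : ℝ)) (-(2 * y⁻)) y := by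
        simpa [negPart_of_nonneg hpos.le] using hasDerivAt_const y (0 : ℝ)
      refine hzero.congr_of_eventuallyEq ?_
      filter_upwards [Ioi_mem_nhds hpos] with z hz
      rw [negPart_of_nonneg (le_of_lt hz), zero_pow two_ne_zero]
  rcases eq_or_ne x 0 with rfl | hx
  · exact hasDerivAt_of_hasDerivAt_of_ne of_ne_zero (continuous_negPart.pow 2).continuousAt
      (continuous_const.mul continuous_negPart).neg.continuousAt
  · exact of_ne_zero x hx

theorem hasDerivWithinAt_negPart_dotProduct_self {ι : Type*} [Fintype ι] {w : ℝ → ι → ℝ}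
    {v : ι → ℝ} {I : Set ℝ} {t : ℝ} (hw : HasDerivWithinAt w v I t) :
    HasDerivWithinAt (fun s ↦ (w s)⁻ ⬝ᵥ (w s)⁻) (-(2 * ((w t)⁻ ⬝ᵥ v))) I t := by
  have hterm : ∀ i ∈ Finset.univ,
      HasDerivWithinAt (fun s ↦ (w s i)⁻ ^ 2) (-(2 * (w t i)⁻) * v i) I t := fun i _ ↦
    HasDerivAt.comp_hasDerivWithinAt (h₂ := fun y : ℝ ↦ y⁻ ^ 2) t (hasDerivAt_negPart_sq (w t i))
      (hasDerivWithinAt_pi.1 hw i)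
  have hsum (s : ℝ) : (w s)⁻ ⬝ᵥ (w s)⁻ = ∑ i, (w s i)⁻ ^ 2 := by
    simp only [dotProduct, Pi.negPart_apply, sq]
  simp only [hsum]
  refine (HasDerivWithinAt.fun_sum hterm).congr_deriv ?_
  simp only [dotProduct, Pi.negPart_apply, Finset.mul_sum, ← Finset.sum_neg_distrib, neg_mul,
    mul_assoc]

variable {a b c : ℝ} {u u' : ℝ → ℝ}

theorem exp_mul_le_of_mul_le_deriv
    (hu : ∀ t ∈ Icc a b, HasDerivWithinAt u (u' t) (Icc a b) t)
    (hle : ∀ t ∈ Icc a b, c * u t ≤ u' t) {t : ℝ} (ht : t ∈ Icc a b) :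
    Real.exp (c * (t - a)) * u a ≤ u t := by
  have hderiv : ∀ s ∈ Icc a b, HasDerivWithinAt (fun s ↦ Real.exp (-(c * s)) * u s)
      (Real.exp (-(c * s)) * (u' s - c * u s)) (Icc a b) s := by
    intro s hs
    have hexp : HasDerivAt (fun s : ℝ ↦ Real.exp (-(c * s))) (Real.exp (-(c * s)) * -c) s := by
      simpa using ((hasDerivAt_id s).const_mul c).neg.exp
    exact (hexp.hasDerivWithinAt.mul (hu s hs)).congr_deriv (by ring)
  have hmono : MonotoneOn (fun s ↦ Real.exp (-(c * s)) * u s) (Icc a b) :=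
    monotoneOn_of_hasDerivWithinAt_nonneg (convex_Icc a b)
      (fun s hs ↦ (hderiv s hs).continuousWithinAt)
      (fun s hs ↦ (hderiv s (interior_subset hs)).mono interior_subset)
      (fun s hs ↦ mul_nonneg (Real.exp_pos _).le (sub_nonneg.2 (hle s (interior_subset hs))))
  calc Real.exp (c * (t - a)) * u a
      = Real.exp (c * t) * (Real.exp (-(c * a)) * u a) := by
        rw [← mul_assoc, ← Real.exp_add]; ring_nf
    _ ≤ Real.exp (c * t) * (Real.exp (-(c * t)) * u t) :=
        mul_le_mul_of_nonneg_left (hmono (left_mem_Icc.2 (ht.1.trans ht.2)) ht ht.1)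
          (Real.exp_pos _).le
    _ = u t := by rw [← mul_assoc, ← Real.exp_add, add_neg_cancel, Real.exp_zero, one_mul]

theorem nonpos_of_hasDerivWithinAt_of_forall_le {t d : ℝ} (hu : HasDerivWithinAt u d (Icc a b) t)
    (ht : t ∈ Ioc a b) (hmin : ∀ s ∈ Icc a b, u t ≤ u s) : d ≤ 0 := by
  have hseg : segment ℝ t a ⊆ Icc a b := by
    rw [segment_symm, segment_eq_Icc ht.1.le]
    exact Icc_subset_Icc_right ht.2
  have hslope : 0 ≤ (a - t) * d := by
    simpa using IsLocalMinOn.hasFDerivWithinAt_nonneg (IsMinOn.localize hmin) hu.hasFDerivWithinAt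
      (sub_mem_posTangentConeAt_of_segment_subset hseg)
  exact nonpos_of_mul_nonneg_right hslope (sub_neg.2 ht.1)

end ScalarInequalities

section LinearInequalities

open scoped Matrix

variable {ι : Type*}

/-- A Metzler matrix: a real square matrix with nonnegative off-diagonal entries. A vector field is
cooperative exactly if its Jacobian matrices are Metzler. -/
def IsMetzler (A : Matrix ι ι ℝ) : Prop :=
  ∀ i j, i ≠ j → 0 ≤ A i j

variable [Fintype ι]

theorem IsMetzler.negPart_dotProduct_mulVec_posPart_nonneg {A : Matrix ι ι ℝ} (hA : IsMetzler A)
    (x : ι → ℝ) : 0 ≤ x⁻ ⬝ᵥ A *ᵥ x⁺ := by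
  refine Finset.sum_nonneg fun i _ ↦ ?_
  rw [Matrix.mulVec, dotProduct, Finset.mul_sum]
  refine Finset.sum_nonneg fun j _ ↦ ?_
  rcases eq_or_ne i j with rfl | hij
  · rcases le_total (x i) 0 with h | h <;> simp [h]
  · exact mul_nonneg (negPart_nonneg _) (mul_nonneg (hA i j hij) (posPart_nonneg _))

theorem dotProduct_mulVec_self_le {A : Matrix ι ι ℝ} {M : ℝ} (hM : ∀ i j, |A i j| ≤ M)
    (x : ι → ℝ) : x ⬝ᵥ A *ᵥ x ≤ Fintype.card ι * M * (x ⬝ᵥ x) := by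
  have hentry : ∀ i j, x i * (A i j * x j) ≤ M / 2 * (x i * x i + x j * x j) := by
    intro i j
    have hle : A i j * (x i * x j) ≤ M * (|x i| * |x j|) := by
      rw [← abs_mul]
      exact (le_abs_self _).trans (abs_mul (A i j) _ ▸
        mul_le_mul_of_nonneg_right (hM i j) (abs_nonneg _))
    have hM0 : 0 ≤ M := (abs_nonneg _).trans (hM i j)
    nlinarith [mul_nonneg hM0 (sq_nonneg (|x i| - |x j|)), sq_abs (x i), sq_abs (x j)]
  calc x ⬝ᵥ A *ᵥ x = ∑ i, ∑ j, x i * (A i j * x j) := by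
        simp only [dotProduct, Matrix.mulVec, Finset.mul_sum]
    _ ≤ ∑ i, ∑ j, M / 2 * (x i * x i + x j * x j) :=
        Finset.sum_le_sum fun i _ ↦ Finset.sum_le_sum fun j _ ↦ hentry i j
    _ = Fintype.card ι * M * (x ⬝ᵥ x) := by
        simp only [dotProduct, mul_add, Finset.sum_add_distrib, Finset.sum_const,
          Finset.card_univ, nsmul_eq_mul]
        simp only [← Finset.mul_sum]
        ring

theorem IsMetzler.neg_negPart_dotProduct_mulVec_le {A : Matrix ι ι ℝ} (hA : IsMetzler A) {M : ℝ}
    (hM : ∀ i j, |A i j| ≤ M) (x : ι → ℝ) :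
    -(x⁻ ⬝ᵥ A *ᵥ x) ≤ Fintype.card ι * M * (x⁻ ⬝ᵥ x⁻) := by
  have hsplit : x⁻ ⬝ᵥ A *ᵥ x = x⁻ ⬝ᵥ A *ᵥ x⁺ - x⁻ ⬝ᵥ A *ᵥ x⁻ := by
    rw [← dotProduct_sub, ← Matrix.mulVec_sub, posPart_sub_negPart]
  linarith [hA.negPart_dotProduct_mulVec_posPart_nonneg x, dotProduct_mulVec_self_le hM x⁻]

theorem IsMetzler.diag_mul_le_mulVec {A : Matrix ι ι ℝ} (hA : IsMetzler A) {x : ι → ℝ}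
    (hx : 0 ≤ x) (i : ι) : A i i * x i ≤ (A *ᵥ x) i := by
  classical
  rw [Matrix.mulVec, dotProduct, ← Finset.add_sum_erase _ _ (Finset.mem_univ i)]
  exact le_add_of_nonneg_right <| Finset.sum_nonneg fun j hj ↦
    mul_nonneg (hA i j (Finset.ne_of_mem_erase hj).symm) (hx j)

theorem IsMetzler.mul_le_mulVec_of_eq_zero {A : Matrix ι ι ℝ} (hA : IsMetzler A) {x : ι → ℝ}
    (hx : 0 ≤ x) {i : ι} (hi : x i = 0) (j : ι) : A i j * x j ≤ (A *ᵥ x) i := by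
  refine Finset.single_le_sum (f := fun k ↦ A i k * x k) (fun k _ ↦ ?_) (Finset.mem_univ j)
  rcases eq_or_ne i k with rfl | hik
  · rw [hi, mul_zero]
  · exact mul_nonneg (hA i k hik) (hx k)

/-- `w` is a supersolution on `[a, b]` of the linear system `ẇ = A(t) w`, that is `A(t) w ≤ w'`
coordinatewise, where the matrices `A(t)` are Metzler with uniformly bounded entries. No regularity
of `A` in `t` is required. -/
structure IsMetzlerSupersolution (A : ℝ → Matrix ι ι ℝ) (a b : ℝ) (w : ℝ → ι → ℝ) : Prop where
  isMetzler : ∀ t ∈ Icc a b, IsMetzler (A t)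
  exists_abs_le : ∃ M, ∀ t ∈ Icc a b, ∀ i j, |A t i j| ≤ M
  exists_deriv : ∀ t ∈ Icc a b, ∃ v, A t *ᵥ w t ≤ v ∧ HasDerivWithinAt w v (Icc a b) t

namespace IsMetzlerSupersolution

variable {A : ℝ → Matrix ι ι ℝ} {a b t : ℝ} {w : ℝ → ι → ℝ}

theorem nonneg (h : IsMetzlerSupersolution A a b w) (h0 : 0 ≤ w a) (ht : t ∈ Icc a b) :
    0 ≤ w t := by
  obtain ⟨M, hM⟩ := h.exists_abs_le
  choose! w' hle hderiv using h.exists_deriv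
  have hV : ∀ s ∈ Icc a b, HasDerivWithinAt (fun s ↦ -((w s)⁻ ⬝ᵥ (w s)⁻))
      (2 * ((w s)⁻ ⬝ᵥ w' s)) (Icc a b) s := fun s hs ↦
    (hasDerivWithinAt_negPart_dotProduct_self (hderiv s hs)).fun_neg.congr_deriv (neg_neg _)
  have hgrowth : ∀ s ∈ Icc a b,
      2 * (Fintype.card ι * M) * -((w s)⁻ ⬝ᵥ (w s)⁻) ≤ 2 * ((w s)⁻ ⬝ᵥ w' s) := by
    intro s hs
    have hAw : (w s)⁻ ⬝ᵥ A s *ᵥ w s ≤ (w s)⁻ ⬝ᵥ w' s :=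
      dotProduct_le_dotProduct_of_nonneg_left (hle s hs) (negPart_nonneg _)
    linarith [(h.isMetzler s hs).neg_negPart_dotProduct_mulVec_le (hM s hs) (w s)]
  have hVt : (w t)⁻ ⬝ᵥ (w t)⁻ ≤ 0 := by
    simpa [negPart_of_nonneg h0] using exp_mul_le_of_mul_le_deriv hV hgrowth ht
  have hzero : (w t)⁻ = 0 :=
    dotProduct_self_eq_zero.1 (hVt.antisymm (Finset.sum_nonneg fun i _ ↦ mul_self_nonneg _))
  exact negPart_eq_zero.1 hzero

theorem apply_pos_of_apply_pos (h : IsMetzlerSupersolution A a b w) (h0 : 0 ≤ w a) {i : ι}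
    (hi : 0 < w a i) (ht : t ∈ Icc a b) : 0 < w t i := by
  obtain ⟨M, hM⟩ := h.exists_abs_le
  choose! w' hle hderiv using h.exists_deriv
  have hgrowth : ∀ s ∈ Icc a b, -M * w s i ≤ w' s i := fun s hs ↦
    calc -M * w s i ≤ A s i i * w s i :=
          mul_le_mul_of_nonneg_right (neg_le_of_abs_le (hM s hs i i)) (h.nonneg h0 hs i)
      _ ≤ (A s *ᵥ w s) i := (h.isMetzler s hs).diag_mul_le_mulVec (h.nonneg h0 hs) i
      _ ≤ w' s i := hle s hs i
  exact (mul_pos (Real.exp_pos _) hi).trans_le <|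
    exp_mul_le_of_mul_le_deriv (fun s hs ↦ hasDerivWithinAt_pi.1 (hderiv s hs) i) hgrowth ht

theorem entry_eq_zero_of_apply_eq_zero (h : IsMetzlerSupersolution A a b w) (h0 : 0 ≤ w a)
    (ht : t ∈ Ioc a b) {i j : ι} (hi : w t i = 0) (hj : w t j ≠ 0) : A t i j = 0 := by
  have htIcc := Ioc_subset_Icc_self ht
  obtain ⟨v, hle, hderiv⟩ := h.exists_deriv t htIcc
  have hij : i ≠ j := fun hij ↦ hj (hij ▸ hi)
  have hvi : v i ≤ 0 := nonpos_of_hasDerivWithinAt_of_forall_le (hasDerivWithinAt_pi.1 hderiv i) ht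
    fun s hs ↦ hi.trans_le (h.nonneg h0 hs i)
  have hmul : A t i j * w t j ≤ 0 :=
    ((h.isMetzler t htIcc).mul_le_mulVec_of_eq_zero (h.nonneg h0 htIcc) hi j).trans
      ((hle i).trans hvi)
  exact (nonpos_of_mul_nonpos_left hmul ((h.nonneg h0 htIcc j).lt_of_ne' hj)).antisymm
    (h.isMetzler t htIcc i j hij)

theorem pos_of_matIrred {n : ℕ} {A : ℝ → Matrix (Fin n) (Fin n) ℝ} {w : ℝ → Fin n → ℝ}
    (h : IsMetzlerSupersolution A a b w) (h0 : 0 < w a) (ht : t ∈ Ioc a b)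
    (hirr : matIrred (A t)) (i : Fin n) : 0 < w t i := by
  obtain ⟨hnonneg, k, hk⟩ := Pi.lt_def.1 h0
  have htIcc := Ioc_subset_Icc_self ht
  by_contra hi
  have hzeros : {l | w t l = 0}.Nonempty := ⟨i, (not_lt.1 hi).antisymm (h.nonneg hnonneg htIcc i)⟩
  have hne_univ : {l | w t l = 0} ≠ univ :=
    (ne_univ_iff_exists_notMem _).2 ⟨k, (h.apply_pos_of_apply_pos hnonneg hk htIcc).ne'⟩
  obtain ⟨p, hp, q, hq, hpq⟩ := hirr _ hzeros hne_univ
  exact hpq (h.entry_eq_zero_of_apply_eq_zero hnonneg ht hp hq)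

end IsMetzlerSupersolution

end LinearInequalities

section Segments

theorem segment_subset_iff_lineMap_mem {E : Type*} [AddCommGroup E] [Module ℝ E] {x y : E}
    {U : Set E} : segment ℝ x y ⊆ U ↔ ∀ s ∈ Icc (0 : ℝ) 1, AffineMap.lineMap x y s ∈ U := by
  rw [segment_eq_image_lineMap, image_subset_iff]
  rfl

theorem eventually_segment_subset {E : Type*} [AddCommGroup E] [Module ℝ E] [TopologicalSpace E]
    [IsTopologicalAddGroup E] [ContinuousSMul ℝ E] {x y : E} {U : Set E} (hU : IsOpen U)
    (hseg : segment ℝ x y ⊆ U) : ∀ᶠ p in 𝓝 (x, y), segment ℝ p.1 p.2 ⊆ U := by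
  simp only [segment_subset_iff_lineMap_mem] at hseg ⊢
  refine isCompact_Icc.eventually_forall_of_forall_eventually fun s hs ↦ ?_
  have hcont : Continuous fun q : (E × E) × ℝ ↦ AffineMap.lineMap q.1.1 q.1.2 q.2 := by
    simp only [AffineMap.lineMap_apply_module]
    fun_prop
  exact hcont.continuousAt.eventually (hU.mem_nhds (hseg s hs))

theorem exists_norm_le_on_segments {E F T : Type*} [AddCommGroup E] [Module ℝ E]
    [TopologicalSpace E] [IsTopologicalAddGroup E] [ContinuousSMul ℝ E]
    [SeminormedAddCommGroup F] [TopologicalSpace T] {g : E → F} {X : Set E}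
    (hg : ContinuousOn g X) {K : Set T} (hK : IsCompact K) {γ δ : T → E} (hγ : ContinuousOn γ K)
    (hδ : ContinuousOn δ K) (hseg : ∀ t ∈ K, segment ℝ (γ t) (δ t) ⊆ X) :
    ∃ M, ∀ t ∈ K, ∀ z ∈ segment ℝ (γ t) (δ t), ‖g z‖ ≤ M := by
  have hcont : ContinuousOn (fun p : T × ℝ ↦ AffineMap.lineMap (γ p.1) (δ p.1) p.2)
      (K ×ˢ Icc 0 1) := by
    have hγ' := hγ.comp continuousOn_fst fun p (hp : p ∈ K ×ˢ Icc (0 : ℝ) 1) ↦ hp.1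
    have hδ' := hδ.comp continuousOn_fst fun p (hp : p ∈ K ×ˢ Icc (0 : ℝ) 1) ↦ hp.1
    simp only [AffineMap.lineMap_apply_module]
    exact ((continuousOn_const.sub continuousOn_snd).smul hγ').add (continuousOn_snd.smul hδ')
  obtain ⟨M, hM⟩ := (hK.prod isCompact_Icc).exists_bound_of_continuousOn
    (hg.comp hcont fun p hp ↦ segment_subset_iff_lineMap_mem.1 (hseg p.1 hp.1) p.2 hp.2)
  exact ⟨M, fun t ht ↦ segment_subset_iff_lineMap_mem.2 fun s hs ↦ hM (t, s) ⟨ht, hs⟩⟩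

theorem pconvex.segment_subset {n : ℕ} {X : Set (Fin n → ℝ)} (hpc : pconvex X) {x y : Fin n → ℝ}
    (hx : x ∈ X) (hy : y ∈ X) (hxy : x ≤ y) : segment ℝ x y ⊆ X := by
  rcases hxy.eq_or_lt with rfl | hlt
  · simpa only [segment_same, singleton_subset_iff] using hx
  · exact hpc x hx y hy hlt

end Segments

section MeanJacobian

open scoped Matrix

variable {n : ℕ} {f : (Fin n → ℝ) → Fin n → ℝ} {X : Set (Fin n → ℝ)} {x y : Fin n → ℝ}

/-- The mean of the Jacobian matrices of `f` over the segment from `x` to `y`. If the segment lies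
in a domain where `f` is `C¹`, it is a matrix that sends `y - x` to `f y - f x`. -/
def meanJac (f : (Fin n → ℝ) → Fin n → ℝ) (x y : Fin n → ℝ) : Matrix (Fin n) (Fin n) ℝ :=
  fun i j ↦ ∫ s in (0 : ℝ)..1, jacMat f (AffineMap.lineMap x y s) i j

theorem jacMat_mulVec (f : (Fin n → ℝ) → Fin n → ℝ) (x v : Fin n → ℝ) :
    Matrix.mulVec (jacMat f x) v = fderiv ℝ f x v := by
  have hmat : jacMat f x = LinearMap.toMatrix' (fderiv ℝ f x : (Fin n → ℝ) →ₗ[ℝ] Fin n → ℝ) := by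
    ext i j
    simp [jacMat, LinearMap.toMatrix'_apply]
  rw [hmat, LinearMap.toMatrix'_mulVec]
  rfl

theorem continuousOn_jacMat (hX : IsOpen X) (hf : ContDiffOn ℝ 1 f X) :
    ContinuousOn (jacMat f) X := by
  have hfderiv := hf.continuousOn_fderiv_of_isOpen hX le_rfl
  exact continuousOn_pi.2 fun i ↦ continuousOn_pi.2 fun j ↦
    continuousOn_pi.1 (hfderiv.clm_apply continuousOn_const) i

theorem continuousOn_jacMat_lineMap (hX : IsOpen X) (hf : ContDiffOn ℝ 1 f X)
    (hseg : segment ℝ x y ⊆ X) (i j : Fin n) :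
    ContinuousOn (fun s : ℝ ↦ jacMat f (AffineMap.lineMap x y s) i j) (Icc 0 1) :=
  continuousOn_pi.1 (continuousOn_pi.1 ((continuousOn_jacMat hX hf).comp
    AffineMap.lineMap_continuous.continuousOn (segment_subset_iff_lineMap_mem.1 hseg)) i) j

theorem meanJac_mulVec_sub (hX : IsOpen X) (hf : ContDiffOn ℝ 1 f X)
    (hseg : segment ℝ x y ⊆ X) : meanJac f x y *ᵥ (y - x) = f y - f x := by
  ext i
  have hcont : ∀ j, ContinuousOn
      (fun s : ℝ ↦ jacMat f (AffineMap.lineMap x y s) i j * (y - x) j) (uIcc 0 1) := fun j ↦ by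
    rw [uIcc_of_le zero_le_one]
    exact (continuousOn_jacMat_lineMap hX hf hseg i j).mul continuousOn_const
  have hderiv : ∀ s ∈ uIcc (0 : ℝ) 1, HasDerivAt (fun s : ℝ ↦ f (AffineMap.lineMap x y s) i)
      (∑ j, jacMat f (AffineMap.lineMap x y s) i j * (y - x) j) s := by
    intro s hs
    rw [uIcc_of_le zero_le_one] at hs
    have hfs : HasFDerivAt f (fderiv ℝ f (AffineMap.lineMap x y s)) (AffineMap.lineMap x y s) :=
      ((hf.differentiableOn one_ne_zero).differentiableAt
        (hX.mem_nhds (segment_subset_iff_lineMap_mem.1 hseg s hs))).hasFDerivAt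
    have := hasDerivAt_pi.1 (hfs.comp_hasDerivAt s AffineMap.hasDerivAt_lineMap) i
    rwa [← jacMat_mulVec] at this
  calc (meanJac f x y *ᵥ (y - x)) i
      = ∑ j, ∫ s in (0 : ℝ)..1, jacMat f (AffineMap.lineMap x y s) i j * (y - x) j := by
        simp only [Matrix.mulVec, dotProduct, meanJac, intervalIntegral.integral_mul_const]
    _ = ∫ s in (0 : ℝ)..1, ∑ j, jacMat f (AffineMap.lineMap x y s) i j * (y - x) j :=
        (intervalIntegral.integral_finsetSum fun j _ ↦ (hcont j).intervalIntegrable).symm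
    _ = (f y - f x) i := by
        rw [intervalIntegral.integral_eq_sub_of_hasDerivAt hderiv
          (continuousOn_finsetSum _ fun j _ ↦ hcont j).intervalIntegrable]
        simp

theorem isMetzler_meanJac (hcoop : coopVF f X) (hseg : segment ℝ x y ⊆ X) :
    IsMetzler (meanJac f x y) := fun i j hij ↦
  intervalIntegral.integral_nonneg zero_le_one fun s hs ↦
    hcoop _ (segment_subset_iff_lineMap_mem.1 hseg s hs) i j hij

theorem abs_meanJac_le {M : ℝ} (hM : ∀ z ∈ segment ℝ x y, ‖jacMat f z‖ ≤ M) (i j : Fin n) :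
    |meanJac f x y i j| ≤ M := by
  have hentry : ∀ s ∈ uIoc (0 : ℝ) 1, ‖jacMat f (AffineMap.lineMap x y s) i j‖ ≤ M := by
    intro s hs
    rw [uIoc_of_le zero_le_one] at hs
    exact (norm_le_pi_norm _ j).trans <| (norm_le_pi_norm _ i).trans <|
      segment_subset_iff_lineMap_mem.1 hM s (Ioc_subset_Icc_self hs)
  simpa [meanJac] using intervalIntegral.norm_integral_le_of_norm_le_const hentry

theorem matIrred_meanJac (hX : IsOpen X) (hf : ContDiffOn ℝ 1 f X) (hcoop : coopVF f X)
    (hseg : segment ℝ x y ⊆ X) (hirr : matIrred (jacMat f x)) : matIrred (meanJac f x y) := by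
  intro S hS hSuniv
  obtain ⟨i, hi, j, hj, hij⟩ := hirr S hS hSuniv
  have hne : i ≠ j := fun h ↦ hj (h ▸ hi)
  have hnonneg : ∀ s ∈ Icc (0 : ℝ) 1, 0 ≤ jacMat f (AffineMap.lineMap x y s) i j := fun s hs ↦
    hcoop _ (segment_subset_iff_lineMap_mem.1 hseg s hs) i j hne
  have hpos : 0 < jacMat f (AffineMap.lineMap x y (0 : ℝ)) i j :=
    (hnonneg 0 (left_mem_Icc.2 zero_le_one)).lt_of_ne' (by rwa [AffineMap.lineMap_apply_zero])
  exact ⟨i, hi, j, hj, (intervalIntegral.integral_pos zero_lt_one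
    (continuousOn_jacMat_lineMap hX hf hseg i j)
    (fun s hs ↦ hnonneg s (Ioc_subset_Icc_self hs))
    ⟨0, left_mem_Icc.2 zero_le_one, hpos⟩).ne'⟩

end MeanJacobian

section Comparison

variable {n : ℕ} {X : Set (Fin n → ℝ)} {f : (Fin n → ℝ) → Fin n → ℝ} {I J : Set ℝ} {a b t : ℝ}
  {γ δ : ℝ → Fin n → ℝ}

/-- `γ` is a subsolution of `ẋ = f(x)` on the time interval `I`, with values in `X`: its derivative
exists and satisfies `γ' ≤ f(γ)` coordinatewise. -/
def IsSubsolOn (f : (Fin n → ℝ) → Fin n → ℝ) (X : Set (Fin n → ℝ)) (I : Set ℝ)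
    (γ : ℝ → Fin n → ℝ) : Prop :=
  (∀ t ∈ I, γ t ∈ X) ∧ ∀ t ∈ I, ∃ v ≤ f (γ t), HasDerivWithinAt γ v I t

/-- `δ` is a supersolution of `ẋ = f(x)` on the time interval `I`, with values in `X`: its
derivative exists and satisfies `f(δ) ≤ δ'` coordinatewise. -/
def IsSupersolOn (f : (Fin n → ℝ) → Fin n → ℝ) (X : Set (Fin n → ℝ)) (I : Set ℝ)
    (δ : ℝ → Fin n → ℝ) : Prop :=
  (∀ t ∈ I, δ t ∈ X) ∧ ∀ t ∈ I, ∃ v, f (δ t) ≤ v ∧ HasDerivWithinAt δ v I t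

theorem IsSolOn.isSubsolOn (h : IsSolOn f X I γ) : IsSubsolOn f X I γ :=
  ⟨h.1, fun t ht ↦ ⟨_, le_rfl, h.2 t ht⟩⟩

theorem IsSolOn.isSupersolOn (h : IsSolOn f X I γ) : IsSupersolOn f X I γ :=
  ⟨h.1, fun t ht ↦ ⟨_, le_rfl, h.2 t ht⟩⟩

theorem IsSubsolOn.mono (h : IsSubsolOn f X I γ) (hJI : J ⊆ I) : IsSubsolOn f X J γ :=
  ⟨fun t ht ↦ h.1 t (hJI ht), fun t ht ↦ (h.2 t (hJI ht)).imp fun _ hv ↦ ⟨hv.1, hv.2.mono hJI⟩⟩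

theorem IsSupersolOn.mono (h : IsSupersolOn f X I δ) (hJI : J ⊆ I) : IsSupersolOn f X J δ :=
  ⟨fun t ht ↦ h.1 t (hJI ht), fun t ht ↦ (h.2 t (hJI ht)).imp fun _ hv ↦ ⟨hv.1, hv.2.mono hJI⟩⟩

theorem IsSubsolOn.continuousOn (h : IsSubsolOn f X I γ) : ContinuousOn γ I := fun t ht ↦
  let ⟨_, _, hderiv⟩ := h.2 t ht
  hderiv.continuousWithinAt

theorem IsSupersolOn.continuousOn (h : IsSupersolOn f X I δ) : ContinuousOn δ I := fun t ht ↦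
  let ⟨_, _, hderiv⟩ := h.2 t ht
  hderiv.continuousWithinAt

theorem isMetzlerSupersolution_sub (hX : IsOpen X) (hf : ContDiffOn ℝ 1 f X) (hcoop : coopVF f X)
    (hγ : IsSubsolOn f X (Icc a b) γ) (hδ : IsSupersolOn f X (Icc a b) δ)
    (hseg : ∀ t ∈ Icc a b, segment ℝ (γ t) (δ t) ⊆ X) :
    IsMetzlerSupersolution (fun t ↦ meanJac f (γ t) (δ t)) a b (δ - γ) where
  isMetzler t ht := isMetzler_meanJac hcoop (hseg t ht)
  exists_abs_le :=
    (exists_norm_le_on_segments (continuousOn_jacMat hX hf) isCompact_Icc hγ.continuousOn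
      hδ.continuousOn hseg).imp fun _ hM t ht ↦ abs_meanJac_le (hM t ht)
  exists_deriv t ht := by
    obtain ⟨u, hu, hγderiv⟩ := hγ.2 t ht
    obtain ⟨v, hv, hδderiv⟩ := hδ.2 t ht
    refine ⟨v - u, ?_, hδderiv.sub hγderiv⟩
    rw [Pi.sub_apply, meanJac_mulVec_sub hX hf (hseg t ht)]
    exact sub_le_sub hv hu

theorem IsSubsolOn.le_of_isSupersolOn (hX : IsOpen X) (hpc : pconvex X) (hf : ContDiffOn ℝ 1 f X)
    (hcoop : coopVF f X) (hγ : IsSubsolOn f X (Icc a b) γ) (hδ : IsSupersolOn f X (Icc a b) δ)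
    (h0 : γ a ≤ δ a) (ht : t ∈ Icc a b) : γ t ≤ δ t := by
  have hclosed : IsClosed ({t | γ t ≤ δ t} ∩ Icc a b) := by
    rw [inter_comm]
    exact isClosed_Icc.isClosed_le hγ.continuousOn hδ.continuousOn
  refine hclosed.Icc_subset_of_forall_exists_gt h0 ?_ ht
  rintro t₀ ⟨hle, hat₀, ht₀b⟩ y hy
  have ht₀ : t₀ ∈ Icc a b := ⟨hat₀, ht₀b.le⟩
  have htube : ∀ᶠ t in 𝓝[Icc a b] t₀, segment ℝ (γ t) (δ t) ⊆ X :=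
    ((hγ.continuousOn t₀ ht₀).prodMk_nhds (hδ.continuousOn t₀ ht₀)).eventually <|
      eventually_segment_subset hX (hpc.segment_subset (hγ.1 t₀ ht₀) (hδ.1 t₀ ht₀) hle)
  have htube_right : {t | segment ℝ (γ t) (δ t) ⊆ X} ∈ 𝓝[≥] t₀ := by
    rw [← nhdsWithin_Icc_eq_nhdsGE ht₀b]
    exact nhdsWithin_mono t₀ (Icc_subset_Icc_left hat₀) htube
  obtain ⟨c, ht₀c, hc⟩ := mem_nhdsGE_iff_exists_Icc_subset.1 <|
    inter_mem htube_right (mem_nhdsWithin_of_mem_nhds (Iic_mem_nhds (lt_min hy ht₀b)))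
  have hcle : c ≤ min y b := (hc (right_mem_Icc.2 ht₀c.le)).2
  have hsub : Icc t₀ c ⊆ Icc a b := Icc_subset_Icc hat₀ (hcle.trans (min_le_right y b))
  have hlin := isMetzlerSupersolution_sub hX hf hcoop (hγ.mono hsub) (hδ.mono hsub)
    fun s hs ↦ (hc hs).1
  exact ⟨c, sub_nonneg.1 (hlin.nonneg (sub_nonneg.2 hle) (right_mem_Icc.2 ht₀c.le)),
    ht₀c, hcle.trans (min_le_left y b)⟩

end Comparison

theorem stmt_1_general {n : ℕ} {X : Set (Fin n → ℝ)} (hX : IsOpen X) (hpc : pconvex X)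
    {f : (Fin n → ℝ) → Fin n → ℝ} (hf : ContDiffOn ℝ 1 f X) (hcoop : coopVF f X)
    {a b t : ℝ} {γ δ : ℝ → Fin n → ℝ} (hγ : IsSubsolOn f X (Icc a b) γ)
    (hδ : IsSupersolOn f X (Icc a b) δ) (h0 : γ a < δ a) (ht : t ∈ Ioc a b)
    (hirr : matIrred (jacMat f (γ t))) : strLt (γ t) (δ t) := by
  have hseg : ∀ s ∈ Icc a b, segment ℝ (γ s) (δ s) ⊆ X := fun s hs ↦
    hpc.segment_subset (hγ.1 s hs) (hδ.1 s hs) (hγ.le_of_isSupersolOn hX hpc hf hcoop hδ h0.le hs)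
  have hlin := isMetzlerSupersolution_sub hX hf hcoop hγ hδ hseg
  have hirr_mean : matIrred (meanJac f (γ t) (δ t)) :=
    matIrred_meanJac hX hf hcoop (hseg t (Ioc_subset_Icc_self ht)) hirr
  exact fun i ↦ sub_pos.1 (hlin.pos_of_matIrred (sub_pos.2 h0) ht hirr_mean i)

/-- strong monotonicity of cooperative irreducible systems. -/
theorem stmt_1 {n : ℕ} {X : Set (Fin n → ℝ)} (hX : IsOpen X) (hpc : pconvex X)
    {f : (Fin n → ℝ) → (Fin n → ℝ)} (hf : ContDiffOn ℝ 1 f X) (hcoop : coopVF f X)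
    (hirr : ∀ x ∈ X, matIrred (jacMat f x))
    {T : ℝ} (hT : 0 ≤ T) {γ δ : ℝ → Fin n → ℝ}
    (hγ : IsSolOn f X (Set.Icc 0 T) γ) (hδ : IsSolOn f X (Set.Icc 0 T) δ)
    (h0 : γ 0 < δ 0) :
    ∀ t ∈ Set.Ioc (0 : ℝ) T, strLt (γ t) (δ t) :=
  fun t ht ↦ stmt_1_general hX hpc hf hcoop hγ.isSubsolOn hδ.isSupersolOn h0 ht
    (hirr _ (hγ.1 t (Ioc_subset_Icc_self ht)))
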